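/- Let H be a finite-dimensional complex inner product space, U a unitary operator on H, P an orthogonal projection on H, and ψ₀ ∈ H. Let p ≥ 1 satisfy: for all eigenvalues λ, μ of U, if λ/μ is a root of unity then (λ/μ)^p = 1. Suppose there exist integers a ≥ 1 and b ≥ 0 such that P U^{a n + b} ψ₀ = 0 for all n ∈ ℕ. Then, setting r = b mod p, we have P U^{p n + r} ψ₀ = 0 for all n ∈ ℕ. -/

import Mathlib

open scoped InnerProductSpace

/-- A linear isometry of a finite-dimensional inner product space is a semisimple endomorphism. -/
theorem isSemisimple_of_inner_map_map {H : Type*} [NormedAddCommGroup H] [InnerProductSpace ℂ H]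
    [FiniteDimensional ℂ H] (U : Module.End ℂ H)
    (hU : ∀ x y : H, ⟪U x, U y⟫_ℂ = ⟪x, y⟫_ℂ) : U.IsSemisimple := by
  have hinj : Function.Injective U := by
    rw [injective_iff_map_eq_zero]
    intro x hx
    rw [← inner_self_eq_zero (𝕜 := ℂ), ← hU, hx, inner_zero_left]
  rw [Module.End.isSemisimple_iff]
  intro W hW
  refine ⟨Wᗮ, fun x hx => ?_, W.isCompl_orthogonal⟩
  -- The restriction of `U` to `W` is injective, hence surjective.
  have hsurj : Function.Surjective (U.restrict hW) :=
    LinearMap.surjective_of_injective fun u v huv =>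
      Subtype.ext (hinj (congrArg Subtype.val huv))
  rw [Submodule.mem_comap, Submodule.mem_orthogonal]
  intro y hy
  obtain ⟨⟨z, hz⟩, hzy⟩ := hsurj ⟨y, hy⟩
  have hUz : U z = y := congrArg Subtype.val hzy
  rw [← hUz, hU]
  exact (Submodule.mem_orthogonal W x).1 hx z hz

/-- Over an algebraically closed field, linear maps agreeing on the eigenvectors of a semisimple
endomorphism are equal. -/
theorem Module.End.IsSemisimple.linearMap_ext {K V V' : Type*} [Field K] [IsAlgClosed K]
    [AddCommGroup V] [Module K V] [FiniteDimensional K V] [AddCommGroup V'] [Module K V']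
    {f : Module.End K V} (hf : f.IsSemisimple) {g h : V →ₗ[K] V'}
    (hgh : ∀ μ x, f.HasEigenvector μ x → g x = h x) : g = h := by
  have htop : ⨆ μ, f.eigenspace μ = ⊤ := by
    simpa only [hf.isFinitelySemisimple.maxGenEigenspace_eq_eigenspace] using
      f.iSup_maxGenEigenspace_eq_top
  have hle : ⊤ ≤ LinearMap.eqLocus g h := by
    rw [← htop]
    refine iSup_le fun μ x hx => ?_
    by_cases hx0 : x = 0
    · simp [hx0]
    · exact hgh μ x ⟨hx, hx0⟩
  exact LinearMap.ext fun x => hle Submodule.mem_top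

/-- A function on a finite set that factors through `g` is a polynomial in `g`. -/
theorem Polynomial.exists_eval_comp_eq {ι K : Type*} [Field K] {S : Set ι} (hS : S.Finite)
    (g f : ι → K) (hgf : ∀ x ∈ S, ∀ y ∈ S, g x = g y → f x = f y) :
    ∃ q : Polynomial K, ∀ x ∈ S, q.eval (g x) = f x := by
  classical
  have hex : ∀ z ∈ g '' S, ∃ w, ∀ x ∈ S, g x = z → f x = w := by
    rintro _ ⟨y, hy, rfl⟩
    exact ⟨f y, fun x hx hxy => hgf x hx y hy hxy⟩
  choose! r hr using hex
  refine ⟨Lagrange.interpolate (hS.image g).toFinset id r, fun x hx => ?_⟩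
  have hmem : g x ∈ g '' S := Set.mem_image_of_mem g hx
  have heval := Lagrange.eval_interpolate_at_node r
    (Set.injOn_id ((hS.image g).toFinset : Set K)) ((hS.image g).mem_toFinset.2 hmem)
  exact heval.trans (hr _ hmem x hx rfl).symm

/-- Let `U` be unitary, `P` an orthogonal projection (idempotent and
self-adjoint) and `ψ₀` a vector on a finite-dimensional complex inner product space, and let
`p ≥ 1` be such that for all eigenvalues `λ, μ` of `U`, if `λ/μ` is a root of unity then
`(λ/μ)^p = 1`. If `P U^{a n + b} ψ₀ = 0` for all `n` for some `a ≥ 1`, `b ≥ 0`, then with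
`r = b % p` we have `P U^{p n + r} ψ₀ = 0` for all `n`. -/
theorem stmt_13 {H : Type*} [NormedAddCommGroup H] [InnerProductSpace ℂ H]
    [FiniteDimensional ℂ H]
    (U : H →ₗ[ℂ] H) (hU : ∀ x y : H, ⟪U x, U y⟫_ℂ = ⟪x, y⟫_ℂ)
    (P : H →ₗ[ℂ] H) (hPidem : P ∘ₗ P = P)
    (hPsa : ∀ x y : H, ⟪P x, y⟫_ℂ = ⟪x, P y⟫_ℂ)
    (ψ₀ : H)
    (p : ℕ) (hp : 1 ≤ p)
    (hP : ∀ lam mu : ℂ, Module.End.HasEigenvalue U lam →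
      Module.End.HasEigenvalue U mu →
      (∃ m : ℕ, 1 ≤ m ∧ (lam / mu) ^ m = 1) → (lam / mu) ^ p = 1)
    (a b : ℕ) (ha : 1 ≤ a)
    (hab : ∀ n : ℕ, P ((U ^ (a * n + b)) ψ₀) = 0) :
    ∀ n : ℕ, P ((U ^ (p * n + b % p)) ψ₀) = 0 := by
  intro n
  have hss : Module.End.IsSemisimple U := isSemisimple_of_inner_map_map U hU
  have hne : ∀ lam : ℂ, Module.End.HasEigenvalue U lam → lam ≠ 0 := by
    rintro _ hlam rfl
    obtain ⟨x, hx⟩ := hlam.exists_hasEigenvector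
    apply hx.2
    rw [← inner_self_eq_zero (𝕜 := ℂ), ← hU, hx.apply_eq_smul, zero_smul, inner_zero_left]
  obtain ⟨q, hq⟩ := Polynomial.exists_eval_comp_eq
    (Module.End.finite_hasEigenvalue U) (fun lam : ℂ => lam ^ a)
    (fun lam => (lam ^ p) ^ ((n : ℤ) - (b / p : ℕ))) (by
      intro lam hlam mu hmu h
      have hmu0 := hne mu hmu
      have hpow := hP lam mu hlam hmu
        ⟨a, ha, by rw [div_pow, div_eq_one_iff_eq (pow_ne_zero a hmu0)]; exact h⟩
      rw [div_pow, div_eq_one_iff_eq (pow_ne_zero p hmu0)] at hpow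
      simp only [hpow])
  have hfactor : U ^ (p * n + b % p) = Polynomial.aeval (U ^ a) q * U ^ b := by
    refine hss.linearMap_ext fun lam x hx => ?_
    have hlam : Module.End.HasEigenvalue U lam := Module.End.hasEigenvalue_of_hasEigenvector hx
    have hxa : Module.End.HasEigenvector (U ^ a) (lam ^ a) x :=
      ⟨Module.End.mem_eigenspace_iff.2 (hx.pow_apply a), hx.2⟩
    have hscalar : lam ^ (p * n + b % p) = lam ^ b * q.eval (lam ^ a) := by
      have hp0 : lam ^ p ≠ 0 := pow_ne_zero p (hne lam hlam)
      have hb : lam ^ b = (lam ^ p) ^ (b / p) * lam ^ (b % p) := by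
        rw [← pow_mul, ← pow_add, Nat.div_add_mod]
      rw [hq lam hlam, zpow_sub₀ hp0, zpow_natCast, zpow_natCast, hb, pow_add, pow_mul]
      field_simp
    rw [Module.End.mul_apply, hx.pow_apply, hx.pow_apply, map_smul,
      Module.End.aeval_apply_of_hasEigenvector hxa, smul_smul, hscalar]
  have hvanish : ∀ q : Polynomial ℂ, P (Polynomial.aeval (U ^ a) q ((U ^ b) ψ₀)) = 0 := by
    intro q
    induction q using Polynomial.induction_on' with
    | add q₁ q₂ h₁ h₂ => simp [h₁, h₂]
    | monomial k c =>
      rw [Polynomial.aeval_monomial, Module.End.mul_apply, Module.algebraMap_end_apply, map_smul,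
        ← pow_mul, ← Module.End.mul_apply (U ^ (a * k)), ← pow_add, hab, smul_zero]
  rw [hfactor, Module.End.mul_apply, hvanish]
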